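/- arXiv:math/0406127 — 2 statements merged into one kernel-verified Lean document; each statement's English description precedes it below -/
import Mathlib

section
/- Let n = (n₁,...,n_d) ∈ ℤ^d with n_j ≥ 1, let G = ℤ/n₁ × ... × ℤ/n_d, and let A ⊆ {0,...,n₁−1} × ... × {0,...,n_d−1} ⊆ ℤ^d be a set which is not spectral as a subset of G. Define T(n,k) = {0, n₁, 2n₁, ..., (k−1)n₁} × ... × {0, n_d, ..., (k−1)n_d} and A(k) = A + T(n,k) ⊆ ℤ^d. Then for all sufficiently large k, the set A(k) is not a spectral set in ℤ^d. -/
open scoped BigOperators Pointwise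
open Complex Real

/-- A finite set `B ⊆ ℤ^d` is spectral in `ℤ^d` if there is a set `S` of frequencies
(in `ℝ^d`, thought of mod 1, i.e. in `𝕋^d`) with `#S = #B` and `χ̂_B(s - s') = 0` for
all distinct `s, s' ∈ S`. -/
def SpectralZd {d : ℕ} (B : Finset (Fin d → ℤ)) : Prop :=
  ∃ S : Finset (Fin d → ℝ), S.card = B.card ∧
    ∀ s ∈ S, ∀ s' ∈ S, s ≠ s' →
      ∑ b ∈ B, Complex.exp (2 * π * Complex.I * (∑ j, (s j - s' j) * (b j : ℝ) : ℝ)) = 0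

/-!
Let `S` be a spectrum of `A(k) = A + T(n, k)`, so `#S = #A * k ^ d`. Writing `n_j s_j` as its
integer part plus its fractional part, the pigeonhole principle gives `#A` points of `S` whose
fractional parts differ by less than `1 / k` in every coordinate. For two such points `s ≠ s'` the
factor `χ̂_{T(n, k)}(s - s')` of `χ̂_{A(k)}(s - s')` is a product of geometric sums of length `k`
whose ratios are `exp (2πit)` with `t` within `1 / k` of an integer, hence nonzero, so
`χ̂_A(s - s') = 0`. Replacing `n_j s_j` by its integer part moves `s - s'` by at most `1 / k`, and
produces characters of `G` at whose quotients `χ̂_A` is `O(1 / k)`. As `χ̂_A` takes finitely many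
values on `Ĝ`, for large `k` these values are exactly `0`, and the `#A` characters form a spectrum
of `A` in `G`.
-/

open Filter Topology Finset FourierTransform

section AdditiveCharacters

variable {M N R ι : Type*}

lemma injOn_add_of_injOn_of_map_eq_zero [AddGroup M] [AddZeroClass N] {f : M →+ N} {s t : Set M}
    (hs : Set.InjOn f s) (ht : ∀ x ∈ t, f x = 0) :
    Set.InjOn (fun p : M × M => p.1 + p.2) (s ×ˢ t) := by
  rintro ⟨a, x⟩ ⟨ha, hx⟩ ⟨b, y⟩ ⟨hb, hy⟩ (h : a + x = b + y)
  have hab : a = b := hs ha hb (by simpa [ht x hx, ht y hy] using congrArg f h)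
  subst hab
  exact congrArg _ (add_left_cancel h)

lemma sum_addChar_add [AddMonoid M] [DecidableEq M] [Semiring R] (ψ : AddChar M R)
    {s t : Finset M} (h : Set.InjOn (fun p : M × M => p.1 + p.2) (s ×ˢ t)) :
    ∑ x ∈ s + t, ψ x = (∑ a ∈ s, ψ a) * ∑ b ∈ t, ψ b := by
  rw [← image_add_product, sum_image (by simpa only [coe_product] using h), sum_mul_sum,
    sum_product]
  simp only [AddChar.map_add_eq_mul]

lemma exists_spectrum_of_pairwise_orthogonal [AddCommGroup N] [CommSemiring R] [CharZero R]
    {A : Finset M} {f : M → N} {S : Finset ι} (φ : ι → AddChar N R) (hcard : #A ≤ #S)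
    (horth : ∀ i ∈ S, ∀ j ∈ S, i ≠ j → ∑ a ∈ A, (φ i * (φ j)⁻¹) (f a) = 0) :
    ∃ Λ : Finset (AddChar N R), #Λ = #A ∧
      ∀ lam ∈ Λ, ∀ mu ∈ Λ, lam ≠ mu → ∑ a ∈ A, (lam * mu⁻¹) (f a) = 0 := by
  classical
  obtain rfl | hA := A.eq_empty_or_nonempty
  · exact ⟨∅, by simp⟩
  obtain ⟨S', hS', hS'card⟩ := exists_subset_card_eq hcard
  have hinj : Set.InjOn φ S' := by
    intro i hi j hj hij
    by_contra hne
    have h := horth i (hS' hi) j (hS' hj) hne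
    simp [hij, hA.ne_empty] at h
  refine ⟨S'.image φ, by rw [card_image_of_injOn hinj, hS'card], ?_⟩
  simp only [mem_image]
  rintro _ ⟨i, hi, rfl⟩ _ ⟨j, hj, rfl⟩ hne
  exact horth i (hS' hi) j (hS' hj) (ne_of_apply_ne φ hne)

end AdditiveCharacters

section Fourier

lemma fourierChar_eq_one_iff {x : ℝ} : 𝐞 x = 1 ↔ ∃ m : ℤ, x = m := by
  rw [fourierChar_apply', Circle.exp_eq_one]
  refine exists_congr fun m => ?_
  rw [mul_comm (m : ℝ), mul_right_inj' two_pi_pos.ne']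

lemma norm_fourierChar_sub_le (x y : ℝ) : ‖(𝐞 x : ℂ) - 𝐞 y‖ ≤ 2 * π * |x - y| := by
  have hfactor : (𝐞 x : ℂ) - 𝐞 y = 𝐞 y * (exp (I * (2 * π * (x - y) : ℝ)) - 1) := by
    rw [mul_comm I, ← fourierChar_apply, mul_sub_one, ← Circle.coe_mul, ← AddChar.map_add_eq_mul,
      add_sub_cancel]
  rw [hfactor, norm_mul, Circle.norm_coe, one_mul]
  refine norm_exp_I_mul_ofReal_sub_one_le.trans_eq ?_
  rw [Real.norm_eq_abs, abs_mul, abs_of_pos two_pi_pos]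

lemma sum_range_fourierChar_ne_zero {k : ℕ} {x : ℝ} {m : ℤ} (hx : |x - m| < 1 / k) :
    ∑ c ∈ range k, (𝐞 (c * x) : ℂ) ≠ 0 := by
  intro hsum
  have hk : (0 : ℝ) < k := one_div_pos.1 ((abs_nonneg _).trans_lt hx)
  have hpow (c : ℕ) : (𝐞 (c * x) : ℂ) = (𝐞 x : ℂ) ^ c := by
    rw [← nsmul_eq_mul, AddChar.map_nsmul_eq_pow, Circle.coe_pow]
  have hroot : 𝐞 (k * x) = 1 := by
    have hgeom := geom_sum_mul (𝐞 x : ℂ) k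
    simp_rw [← hpow, hsum, zero_mul] at hgeom
    exact Circle.coe_eq_one.1 (sub_eq_zero.1 hgeom.symm)
  obtain ⟨p, hp⟩ := fourierChar_eq_one_iff.1 hroot
  have hpk : p = k * m := by
    rw [← sub_eq_zero, ← Int.abs_lt_one_iff]
    have hkx : |k * x - k * m| < 1 := by
      rwa [← mul_sub, abs_mul, abs_of_pos hk, ← lt_div_iff₀' hk]
    rw [hp] at hkx
    exact_mod_cast hkx
  have hxm : x = m := mul_left_cancel₀ hk.ne' (by rw [hp, hpk]; push_cast; rfl)
  have hone : 𝐞 x = 1 := fourierChar_eq_one_iff.2 ⟨m, hxm⟩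
  simp only [hpow, hone, Circle.coe_one, one_pow, sum_const, card_range, nsmul_eq_mul,
    mul_one] at hsum
  exact hk.ne' (by exact_mod_cast hsum)

end Fourier

/-- Reduction modulo `n`, from `ℤ^ι` to `G = ∏ j, ℤ/n_j`. -/
def residueHom {ι : Type*} (n : ι → ℕ) : (ι → ℤ) →+ ∀ j, ZMod (n j) where
  toFun x j := x j
  map_zero' := by ext; simp
  map_add' x y := by ext; simp

lemma residueHom_apply {ι : Type*} (n : ι → ℕ) (x : ι → ℤ) (j : ι) :
    residueHom n x j = x j := rfl

lemma injOn_residueHom_of_mem_box {ι : Type*} {n : ι → ℕ} {A : Set (ι → ℤ)}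
    (hbox : ∀ a ∈ A, ∀ j, 0 ≤ a j ∧ a j < n j) : Set.InjOn (residueHom n) A := by
  intro a ha b hb hab
  ext j
  have hmod : a j % n j = b j % n j := (ZMod.intCast_eq_intCast_iff' _ _ _).1 (congrFun hab j)
  rwa [Int.emod_eq_of_lt (hbox a ha j).1 (hbox a ha j).2,
    Int.emod_eq_of_lt (hbox b hb j).1 (hbox b hb j).2] at hmod

variable {ι : Type*} [Fintype ι]

/-- The character `x ↦ exp (2πi⟨ξ, x⟩)` of `ℤ^ι`, so that `χ̂_B(ξ) = ∑ b ∈ B, freqChar ξ b`. The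
frequency `ξ` is a real vector representing a point of the torus. -/
noncomputable def freqChar (ξ : ι → ℝ) : AddChar (ι → ℤ) ℂ where
  toFun x := 𝐞 (∑ j, ξ j * x j)
  map_zero_eq_one' := by simp
  map_add_eq_mul' x y := by simp [mul_add, sum_add_distrib, AddChar.map_add_eq_mul]

lemma freqChar_apply (ξ : ι → ℝ) (x : ι → ℤ) : freqChar ξ x = 𝐞 (∑ j, ξ j * x j) := rfl

lemma freqChar_apply_eq_prod (ξ : ι → ℝ) (x : ι → ℤ) :
    freqChar ξ x = ∏ j, (𝐞 (ξ j * x j) : ℂ) :=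
  map_prod (Circle.coeHom.comp fourierChar.toMonoidHom)
    (fun j => Multiplicative.ofAdd (ξ j * x j)) univ

lemma spectralZd_iff {d : ℕ} {B : Finset (Fin d → ℤ)} :
    SpectralZd B ↔ ∃ S : Finset (Fin d → ℝ), #S = #B ∧
      ∀ s ∈ S, ∀ s' ∈ S, s ≠ s' → ∑ b ∈ B, freqChar (s - s') b = 0 := by
  have hexp (ξ : Fin d → ℝ) (b : Fin d → ℤ) :
      freqChar ξ b = exp (2 * π * I * (∑ j, ξ j * b j : ℝ)) := by
    rw [freqChar_apply, fourierChar_apply, ofReal_mul, mul_right_comm]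
    norm_cast
  simp only [hexp, SpectralZd, Pi.sub_apply]

lemma norm_freqChar_sub_le (ξ η : ι → ℝ) (x : ι → ℤ) :
    ‖freqChar ξ x - freqChar η x‖ ≤ 2 * π * (∑ j, |(x j : ℝ)|) * ‖ξ - η‖ := by
  refine (norm_fourierChar_sub_le _ _).trans ?_
  rw [mul_assoc (2 * π), sum_mul, ← sum_sub_distrib]
  gcongr
  refine (abs_sum_le_sum_abs _ _).trans (sum_le_sum fun j _ => ?_)
  rw [← sub_mul, abs_mul, mul_comm]
  gcongr
  exact norm_le_pi_norm (ξ - η) j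

lemma norm_sum_freqChar_sub_le (A : Finset (ι → ℤ)) (ξ η : ι → ℝ) :
    ‖∑ a ∈ A, freqChar ξ a - ∑ a ∈ A, freqChar η a‖ ≤
      2 * π * (∑ a ∈ A, ∑ j, |(a j : ℝ)|) * ‖ξ - η‖ := by
  rw [← sum_sub_distrib, mul_sum, sum_mul]
  exact norm_sum_le_of_le _ fun a _ => norm_freqChar_sub_le ξ η a

section DualGroup

variable {n : ι → ℕ} [∀ j, NeZero (n j)]

/-- The character of `G = ∏ j, ℤ/n_j` with frequency `u`, under the standard identification of `G`
with its dual group. -/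
noncomputable def residueChar (u : ∀ j, ZMod (n j)) : AddChar (∀ j, ZMod (n j)) ℂ where
  toFun x := ∏ j, ZMod.stdAddChar (u j * x j)
  map_zero_eq_one' := by simp
  map_add_eq_mul' x y := by simp [mul_add, AddChar.map_add_eq_mul, prod_mul_distrib]

lemma residueChar_apply (u x : ∀ j, ZMod (n j)) :
    residueChar u x = ∏ j, ZMod.stdAddChar (u j * x j) := rfl

lemma residueChar_sub (u v : ∀ j, ZMod (n j)) :
    residueChar (u - v) = residueChar u * (residueChar v)⁻¹ := by
  rw [eq_mul_inv_iff_mul_eq]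
  ext x
  simp only [AddChar.mul_apply, residueChar_apply, ← prod_mul_distrib, ← AddChar.map_add_eq_mul,
    ← add_mul, Pi.sub_apply, sub_add_cancel]

lemma residueChar_residueHom (m x : ι → ℤ) :
    residueChar (residueHom n m) (residueHom n x) = freqChar (fun j => m j / n j) x := by
  rw [residueChar_apply, freqChar_apply_eq_prod]
  refine prod_congr rfl fun j _ => ?_
  rw [residueHom_apply, residueHom_apply, ← Int.cast_mul, ZMod.stdAddChar_coe, fourierChar_apply]
  congr 1
  push_cast
  ring

end DualGroup

lemma injective_latticeBox_coords {ι : Type*} {n : ι → ℕ} {k : ℕ} [∀ j, NeZero (n j)] :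
    Function.Injective fun (c : ι → Fin k) j => (c j : ℤ) * (n j : ℤ) := by
  intro c c' h
  ext j
  exact_mod_cast mul_right_cancel₀ (Nat.cast_ne_zero.2 (NeZero.ne (n j))) (congrFun h j)

section LatticeBox

variable [DecidableEq ι] {n : ι → ℕ} {k : ℕ}

/-- The set `T(n, k) = ∏ j, {0, n_j, …, (k - 1) n_j}`. -/
def latticeBox (n : ι → ℕ) (k : ℕ) : Finset (ι → ℤ) :=
  univ.image fun (c : ι → Fin k) j => (c j : ℤ) * (n j : ℤ)

lemma residueHom_eq_zero_of_mem_latticeBox {t : ι → ℤ} (ht : t ∈ latticeBox n k) :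
    residueHom n t = 0 := by
  obtain ⟨c, -, rfl⟩ := mem_image.1 ht
  ext j
  simp [residueHom_apply]

lemma injOn_add_latticeBox {A : Finset (ι → ℤ)} (hA : Set.InjOn (residueHom n) A) :
    Set.InjOn (fun p : (ι → ℤ) × (ι → ℤ) => p.1 + p.2) (A ×ˢ latticeBox n k : Set _) :=
  injOn_add_of_injOn_of_map_eq_zero hA fun _ => residueHom_eq_zero_of_mem_latticeBox

variable [∀ j, NeZero (n j)]

lemma card_latticeBox : #(latticeBox n k) = k ^ Fintype.card ι := by
  simp [latticeBox, card_image_of_injective _ injective_latticeBox_coords]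

lemma sum_freqChar_latticeBox (ξ : ι → ℝ) :
    ∑ t ∈ latticeBox n k, freqChar ξ t = ∏ j, ∑ c ∈ range k, (𝐞 (c * (n j * ξ j)) : ℂ) := by
  simp_rw [sum_range, prod_univ_sum, Fintype.piFinset_univ, latticeBox]
  rw [sum_image injective_latticeBox_coords.injOn]
  refine sum_congr rfl fun c _ => ?_
  rw [freqChar_apply_eq_prod]
  refine prod_congr rfl fun j _ => ?_
  congr 2
  push_cast
  ring

lemma sum_freqChar_latticeBox_ne_zero {ξ : ι → ℝ} {m : ι → ℤ}
    (hξ : ∀ j, |n j * ξ j - m j| < 1 / k) : ∑ t ∈ latticeBox n k, freqChar ξ t ≠ 0 := by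
  rw [sum_freqChar_latticeBox]
  exact prod_ne_zero_iff.2 fun j _ => sum_range_fourierChar_ne_zero (hξ j)

lemma card_add_latticeBox {A : Finset (ι → ℤ)} (hA : Set.InjOn (residueHom n) A) :
    #(A + latticeBox n k) = #A * k ^ Fintype.card ι := by
  rw [card_add_iff.2 (injOn_add_latticeBox hA), card_latticeBox]

lemma sum_freqChar_eq_zero_of_add_latticeBox {A : Finset (ι → ℤ)}
    (hA : Set.InjOn (residueHom n) A) {ξ : ι → ℝ} {m : ι → ℤ}
    (hξ : ∀ j, |n j * ξ j - m j| < 1 / k)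
    (hzero : ∑ b ∈ A + latticeBox n k, freqChar ξ b = 0) : ∑ a ∈ A, freqChar ξ a = 0 := by
  rw [sum_addChar_add _ (injOn_add_latticeBox hA)] at hzero
  exact (mul_eq_zero.1 hzero).resolve_right (sum_freqChar_latticeBox_ne_zero hξ)

end LatticeBox

section Rounding

variable {n : ι → ℕ} [∀ j, NeZero (n j)]

lemma norm_sub_div_le {ξ η : ι → ℝ} {δ : ℝ} (hδ : 0 ≤ δ) (h : ∀ j, |n j * ξ j - η j| ≤ δ) :
    ‖(fun j => η j / n j) - ξ‖ ≤ δ := by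
  refine (pi_norm_le_iff_of_nonneg hδ).2 fun j => ?_
  have hn : (1 : ℝ) ≤ n j := mod_cast NeZero.one_le
  have hn0 : (0 : ℝ) < n j := one_pos.trans_le hn
  have hscale : |n j * ξ j - η j| = n j * |η j / n j - ξ j| := by
    rw [← abs_of_pos hn0, ← abs_mul, abs_of_pos hn0, mul_sub, mul_div_cancel₀ _ hn0.ne',
      abs_sub_comm]
  exact (le_mul_of_one_le_left (abs_nonneg _) hn).trans (hscale ▸ h j)

lemma norm_sum_residueChar_le {A : Finset (ι → ℤ)} {ξ : ι → ℝ} {m : ι → ℤ} {δ : ℝ} (hδ : 0 ≤ δ)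
    (hξ : ∀ j, |n j * ξ j - m j| ≤ δ) (hzero : ∑ a ∈ A, freqChar ξ a = 0) :
    ‖∑ a ∈ A, residueChar (residueHom n m) (residueHom n a)‖ ≤
      2 * π * (∑ a ∈ A, ∑ j, |(a j : ℝ)|) * δ := by
  have h := norm_sum_freqChar_sub_le A (fun j => m j / n j) ξ
  rw [hzero, sub_zero] at h
  simp only [residueChar_residueHom]
  refine h.trans ?_
  gcongr
  exact norm_sub_div_le hδ hξ

end Rounding

lemma exists_subset_abs_fract_sub_lt {X : Type*} {S : Finset X} {N k : ℕ} (hk : 0 < k)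
    (θ : X → ι → ℝ) (hcard : N * k ^ Fintype.card ι ≤ #S) :
    ∃ S' ⊆ S, N ≤ #S' ∧ ∀ s ∈ S', ∀ s' ∈ S', ∀ j,
      |Int.fract (θ s j) - Int.fract (θ s' j)| < 1 / k := by
  classical
  have hk' : (0 : ℝ) < k := mod_cast hk
  let cells : Finset (ι → ℤ) := Fintype.piFinset fun _ => Ico 0 (k : ℤ)
  let cell (s : X) (j : ι) : ℤ := ⌊k * Int.fract (θ s j)⌋
  have hmaps : ∀ s ∈ S, cell s ∈ cells := by
    refine fun s _ => Fintype.mem_piFinset.2 fun j => mem_Ico.2 ⟨?_, ?_⟩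
    · exact Int.floor_nonneg.2 (mul_nonneg hk'.le (Int.fract_nonneg _))
    · exact Int.floor_lt.2 (mul_lt_of_lt_one_right hk' (Int.fract_lt_one _))
  have hcells : #cells = k ^ Fintype.card ι := by simp [cells]
  obtain ⟨c, -, hc⟩ := exists_le_card_fiber_of_mul_le_card_of_maps_to hmaps
    (card_pos.1 (hcells ▸ pow_pos hk _)) (by rwa [hcells, mul_comm])
  refine ⟨_, filter_subset _ S, hc, fun s hs s' hs' j => ?_⟩
  have hcell : cell s j = cell s' j := by rw [(mem_filter.1 hs).2, (mem_filter.1 hs').2]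
  have hlt := Int.abs_sub_lt_one_of_floor_eq_floor hcell
  rwa [← mul_sub, abs_mul, abs_of_pos hk', ← lt_div_iff₀' hk'] at hlt

lemma eventually_forall_eq_zero_of_norm_le {X α E : Type*} [Finite X] [NormedAddGroup E]
    {l : Filter α} {u : α → ℝ} (hu : Tendsto u l (𝓝 0)) (f : X → E) :
    ∀ᶠ a in l, ∀ x, ‖f x‖ ≤ u a → f x = 0 := by
  refine eventually_all.2 fun x => ?_
  by_cases hx : f x = 0
  · exact .of_forall fun _ _ => hx
  · filter_upwards [hu.eventually_lt_const (norm_pos_iff.2 hx)] with a ha hle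
    exact absurd hle ha.not_ge

theorem stmt17_general (d : ℕ) (n : Fin d → ℕ) (hn : ∀ j, 1 ≤ n j) (A : Finset (Fin d → ℤ))
    (hA : Set.InjOn (residueHom n) A)
    (hnotspec : ¬ ∃ Λ : Finset (AddChar (∀ j, ZMod (n j)) ℂ), #Λ = #A ∧
      ∀ lam ∈ Λ, ∀ mu ∈ Λ, lam ≠ mu → ∑ a ∈ A, (lam * mu⁻¹) (residueHom n a) = 0) :
    ∃ k₀ : ℕ, ∀ k ≥ k₀, ¬ SpectralZd (A + latticeBox n k) := by
  have (j : Fin d) : NeZero (n j) := ⟨Nat.one_le_iff_ne_zero.1 (hn j)⟩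
  have hbound : Tendsto (fun k : ℕ => 2 * π * (∑ a ∈ A, ∑ j, |(a j : ℝ)|) * (1 / (k : ℝ)))
      atTop (𝓝 0) := by
    simpa only [mul_zero] using (tendsto_one_div_atTop_nhds_zero_nat (𝕜 := ℝ)).const_mul _
  have hgap := eventually_forall_eq_zero_of_norm_le hbound
    (fun u : ∀ j, ZMod (n j) => ∑ a ∈ A, residueChar u (residueHom n a))
  refine eventually_atTop.1 ((hgap.and (eventually_gt_atTop 0)).mono ?_)
  rintro k ⟨hk, hkpos⟩ hspec
  obtain ⟨S, hScard, hS⟩ := spectralZd_iff.1 hspec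
  rw [card_add_latticeBox hA] at hScard
  obtain ⟨S', hS'S, hS'card, hclose⟩ :=
    exists_subset_abs_fract_sub_lt hkpos (fun s j => n j * s j) hScard.ge
  let M (s : Fin d → ℝ) (j : Fin d) : ℤ := ⌊n j * s j⌋
  refine hnotspec (exists_spectrum_of_pairwise_orthogonal
    (fun s => residueChar (residueHom n (M s))) hS'card fun s hs s' hs' hne => ?_)
  have hround (j : Fin d) : |n j * (s - s') j - ((M s - M s') j : ℤ)| < 1 / k := by
    convert hclose s hs s' hs' j using 2
    simp only [M, Int.fract, Pi.sub_apply, Int.cast_sub]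
    ring
  have hzero : ∑ a ∈ A, freqChar (s - s') a = 0 :=
    sum_freqChar_eq_zero_of_add_latticeBox hA hround (hS s (hS'S hs) s' (hS'S hs') hne)
  rw [← residueChar_sub, ← map_sub]
  exact hk _ (norm_sum_residueChar_le (by positivity) (fun j => (hround j).le) hzero)

/-- Theorem `th:zd`: If `A ⊆ {0,…,n₁-1} × ⋯ × {0,…,n_d-1}` is not
spectral as a subset of the finite group `G = ℤ/n₁ × ⋯ × ℤ/n_d`, then for all
sufficiently large `k` the periodized set `A(k) = A + T(n,k) ⊆ ℤ^d` is not spectral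
in `ℤ^d`, where `T(n,k) = {0, n₁, …, (k-1)n₁} × ⋯ × {0, n_d, …, (k-1)n_d}`. -/
theorem stmt17 (d : ℕ) (n : Fin d → ℕ) (hn : ∀ j, 1 ≤ n j)
    (A : Finset (Fin d → ℤ))
    (hbox : ∀ a ∈ A, ∀ j, 0 ≤ a j ∧ a j < n j)
    (hnotspec : ¬ ∃ Λ : Finset (AddChar (∀ j, ZMod (n j)) ℂ),
        Λ.card = A.card ∧
        ∀ lam ∈ Λ, ∀ mu ∈ Λ, lam ≠ mu →
          ∑ a ∈ A, (lam * mu⁻¹) (fun j => (a j : ZMod (n j))) = 0) :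
    ∃ k₀ : ℕ, ∀ k ≥ k₀,
      ¬ SpectralZd
        (A + (Finset.univ : Finset (Fin d → Fin k)).image
          (fun c : Fin d → Fin k => fun j => (c j : ℤ) * (n j : ℤ))) :=
  stmt17_general d n hn A (injOn_residueHom_of_mem_box hbox) hnotspec
end

section
/- Let A ⊆ ℤ^d be a finite set and Q = [0,1)^d. Then A is a spectral set in ℤ^d if and only if A + Q is a spectral set in ℝ^d. -/
open scoped BigOperators
open Complex Real MeasureTheory

/-- The Fourier transform of the indicator of a set `E ⊆ ℝ^d` at frequency `ξ`. -/
noncomputable def ftInd {d : ℕ} (E : Set (Fin d → ℝ)) (ξ : Fin d → ℝ) : ℂ :=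
  ∫ x in E, Complex.exp (2 * π * Complex.I * (∑ j, ξ j * x j : ℝ))

/-- A bounded measurable set `E ⊆ ℝ^d` of positive measure is spectral in `ℝ^d` if some
(countable) set `S` of exponentials is an orthogonal basis of `L²(E)`; equivalently
`∑_{s∈S} |χ̂_E(x - s)|² = |E|²` for almost every `x ∈ ℝ^d`. -/
def SpectralRd {d : ℕ} (E : Set (Fin d → ℝ)) : Prop :=
  ∃ S : Set (Fin d → ℝ), S.Countable ∧
    ∀ᵐ x : Fin d → ℝ,
      ∑' s : S, ‖ftInd E (x - (s : Fin d → ℝ))‖ ^ 2 = ((volume E).toReal) ^ 2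

/-!
Put `E = A + Q`, so that `χ̂_E = χ̂_A · χ̂_Q`.

If `S` is a spectrum of `A`, then `S + ℤ^d` is a spectrum of `E`: `χ̂_A` is `ℤ^d`-periodic and
`∑_k |χ̂_Q(x - k)|² = 1` by Parseval on `[0, 1)`, so the sum of `|χ̂_E(x - t)|²` over
`t ∈ S + ℤ^d` is `∑_{s ∈ S} |χ̂_A(x - s)|²`, which is `(#A)²` by Parseval in `ℓ²(A)`.

Conversely, let `S` be a spectrum of `E`, so that the translates of `|χ̂_E|²` along `S` tile at
level `|E|² = |χ̂_E(0)|²`. By continuity the sum of any two of them is everywhere at most this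
level, which the translate by `s` reaches at `x = s`; so `χ̂_E` vanishes on all nonzero differences
of `S`. Integrating the tiling identity over `Q` gives `(#A)² = ∫ |χ̂_E(y)|² #(S ∩ (Q - y)) dy`,
and `∫ |χ̂_E|² = #A`; hence some translate of `Q` contains at least `#A`
points of `S`. Differences of two points in a translate of `Q` are not zeros of `χ̂_Q`, so `χ̂_A`
vanishes on the nonzero differences of these points.
-/

open scoped ENNReal FourierTransform Finset

section FourierChar

lemma exp_two_pi_I_mul_eq_fourierChar (t : ℝ) :
    Complex.exp (2 * π * Complex.I * t) = 𝐞 t := by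
  rw [Real.fourierChar_apply]
  push_cast
  ring_nf

lemma fourierChar_eq_one_iff_s18 {t : ℝ} : (𝐞 t : ℂ) = 1 ↔ ∃ n : ℤ, t = n := by
  rw [Circle.coe_eq_one, Real.fourierChar_apply', Circle.exp_eq_one]
  refine exists_congr fun n ↦ ?_
  rw [mul_comm (n : ℝ), mul_right_inj' Real.two_pi_pos.ne']

lemma fourierChar_intCast (n : ℤ) : (𝐞 (n : ℝ) : ℂ) = 1 :=
  fourierChar_eq_one_iff_s18.2 ⟨n, rfl⟩

lemma coe_fourierChar_add (s t : ℝ) : (𝐞 (s + t) : ℂ) = 𝐞 s * 𝐞 t := by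
  rw [AddChar.map_add_eq_mul, Circle.coe_mul]

lemma conj_fourierChar (t : ℝ) : (starRingEnd ℂ) (𝐞 t) = 𝐞 (-t) := by
  rw [AddChar.map_neg_eq_inv, Circle.coe_inv_eq_conj]

lemma fourierChar_dotProduct {ι : Type*} [Fintype ι] (ξ x : ι → ℝ) :
    (𝐞 (ξ ⬝ᵥ x) : ℂ) = ∏ j, (𝐞 (ξ j * x j) : ℂ) := by
  simp only [← exp_two_pi_I_mul_eq_fourierChar, ← Complex.exp_sum, ← Finset.mul_sum, dotProduct,
    Complex.ofReal_sum]

@[fun_prop]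
lemma continuous_fourierChar_dotProduct {ι : Type*} [Fintype ι] :
    Continuous fun p : (ι → ℝ) × (ι → ℝ) ↦ (𝐞 (p.1 ⬝ᵥ p.2) : ℂ) :=
  continuous_subtype_val.comp
    (Real.continuous_fourierChar.comp (continuous_fst.dotProduct continuous_snd))

lemma integrable_fourierChar_dotProduct {ι : Type*} [Fintype ι] {μ : Measure (ι → ℝ)}
    [IsFiniteMeasure μ] (ξ : ι → ℝ) : Integrable (fun x ↦ (𝐞 (ξ ⬝ᵥ x) : ℂ)) μ := by
  refine .of_bound (Continuous.aestronglyMeasurable ?_) 1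
    (.of_forall fun x ↦ (Circle.norm_coe _).le)
  exact continuous_fourierChar_dotProduct.comp (by fun_prop : Continuous fun x ↦ (ξ, x))

end FourierChar

section Interval

/-- The Fourier transform of the indicator of `[0, 1)` at frequency `y`. -/
noncomputable def intervalFT (y : ℝ) : ℂ := ∫ t in (0 : ℝ)..1, (𝐞 (y * t) : ℂ)

lemma intervalFT_zero : intervalFT 0 = 1 := by
  simp [intervalFT]

lemma intervalFT_of_ne_zero {y : ℝ} (hy : y ≠ 0) :
    intervalFT y = (𝐞 y - 1) / (2 * π * Complex.I * y) := by
  have hc : (2 * π * Complex.I * y : ℂ) ≠ 0 := by simp [hy, Real.pi_ne_zero]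
  have h := integral_exp_mul_complex (a := 0) (b := 1) hc
  simp only [Complex.ofReal_one, mul_one, Complex.ofReal_zero, mul_zero, Complex.exp_zero] at h
  rw [intervalFT, ← exp_two_pi_I_mul_eq_fourierChar, ← h]
  simp only [← exp_two_pi_I_mul_eq_fourierChar, Complex.ofReal_mul, mul_assoc]

lemma intervalFT_eq_zero_iff {y : ℝ} : intervalFT y = 0 ↔ ∃ n : ℤ, n ≠ 0 ∧ y = n := by
  rcases eq_or_ne y 0 with rfl | hy
  · simp [intervalFT_zero, eq_comm]
  · have hc : (2 * π * Complex.I * y : ℂ) ≠ 0 := by simp [hy, Real.pi_ne_zero]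
    rw [intervalFT_of_ne_zero hy, div_eq_zero_iff, or_iff_left hc, sub_eq_zero,
      fourierChar_eq_one_iff_s18]
    refine exists_congr fun n ↦ ⟨fun h ↦ ⟨?_, h⟩, And.right⟩
    rintro rfl
    exact hy (by simpa using h)

lemma continuous_intervalFT : Continuous intervalFT :=
  intervalIntegral.continuous_parametric_intervalIntegral_of_continuous'
    (f := fun y t ↦ (𝐞 (y * t) : ℂ)) (by fun_prop) 0 1

lemma fourierCoeffOn_fourierChar (y : ℝ) (k : ℤ) :
    fourierCoeffOn zero_lt_one (fun t ↦ (𝐞 (y * t) : ℂ)) k = intervalFT (y - k) := by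
  rw [fourierCoeffOn_eq_integral, intervalFT, sub_zero, div_one, one_smul]
  congr 1 with t
  rw [fourier_coe_apply, smul_eq_mul, sub_mul, sub_eq_neg_add, coe_fourierChar_add]
  congr 1
  rw [← exp_two_pi_I_mul_eq_fourierChar]
  push_cast
  ring_nf

lemma tsum_enorm_sq_intervalFT_sub_intCast (y : ℝ) :
    ∑' k : ℤ, ‖intervalFT (y - k)‖ₑ ^ 2 = 1 := by
  have hL2 : MemLp (fun t ↦ (𝐞 (y * t) : ℂ)) 2 (volume.restrict (Set.Ioc (0 : ℝ) 1)) :=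
    .of_bound (Continuous.aestronglyMeasurable (by fun_prop)) 1
      (.of_forall fun t ↦ (Circle.norm_coe _).le)
  have hParseval := hasSum_sq_fourierCoeffOn zero_lt_one hL2
  simp only [fourierCoeffOn_fourierChar, Circle.norm_coe, one_pow, sub_zero, inv_one,
    intervalIntegral.integral_const, smul_eq_mul, mul_one] at hParseval
  simp only [← ofReal_norm, ← ENNReal.ofReal_pow (norm_nonneg _)]
  rw [← ENNReal.ofReal_tsum_of_nonneg (fun _ ↦ sq_nonneg _) hParseval.summable,
    hParseval.tsum_eq, ENNReal.ofReal_one]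

end Interval

section Cube

variable {ι : Type*}

/-- The inclusion of the integer lattice `ℤ^ι` into `ℝ^ι`. -/
def intVec : (ι → ℤ) →+ (ι → ℝ) := (Int.castAddHom ℝ).compLeft ι

@[simp]
lemma intVec_apply (k : ι → ℤ) (j : ι) : intVec k j = k j := rfl

variable (ι) in
/-- The unit cube `Q = [0, 1)^ι`. -/
def unitCube : Set (ι → ℝ) := Set.univ.pi fun _ ↦ Set.Ico 0 1

lemma sub_intVec_mem_unitCube_iff {x : ι → ℝ} {k : ι → ℤ} :
    x - intVec k ∈ unitCube ι ↔ k = fun j ↦ ⌊x j⌋ := by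
  simp only [unitCube, Set.mem_univ_pi, Pi.sub_apply, intVec_apply, ← Int.floor_eq_zero_iff,
    Int.floor_sub_intCast, sub_eq_zero, funext_iff, eq_comm]

lemma encard_setOf_add_intVec_mem_unitCube (y : ι → ℝ) :
    {k : ι → ℤ | y + intVec k ∈ unitCube ι}.encard = 1 := by
  refine Set.encard_eq_one.2 ⟨-fun j ↦ ⌊y j⌋, Set.ext fun k ↦ ?_⟩
  rw [Set.mem_ofPred_eq, Set.mem_singleton_iff, ← sub_neg_eq_add, ← map_neg,
    sub_intVec_mem_unitCube_iff, neg_eq_iff_eq_neg]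

lemma measurableSet_unitCube [Countable ι] : MeasurableSet (unitCube ι) :=
  .univ_pi fun _ ↦ measurableSet_Ico

lemma volume_unitCube [Fintype ι] : volume (unitCube ι) = 1 := by
  simp [unitCube, volume_pi_pi]

lemma pairwise_disjoint_preimage_sub_intVec_unitCube :
    Pairwise (Function.onFun Disjoint fun k : ι → ℤ ↦ (· - intVec k) ⁻¹' unitCube ι) := by
  refine fun k l hkl ↦ Set.disjoint_left.2 fun x hk hl ↦ hkl ?_
  rw [Set.mem_preimage, sub_intVec_mem_unitCube_iff] at hk hl
  exact hk.trans hl.symm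

lemma measurableSet_preimage_sub_unitCube [Countable ι] (v : ι → ℝ) :
    MeasurableSet ((· - v) ⁻¹' unitCube ι) :=
  measurableSet_unitCube.preimage (measurable_sub_const v)

lemma volume_preimage_sub_unitCube [Fintype ι] (v : ι → ℝ) :
    volume ((· - v) ⁻¹' unitCube ι) = 1 := by
  simp only [sub_eq_add_neg, measure_preimage_add_right, volume_unitCube]

/-- The union `A + Q` of the integer translates of the unit cube with corners in `A`. -/
def cubeUnion (A : Finset (ι → ℤ)) : Set (ι → ℝ) :=
  {x | ∃ a ∈ A, ∀ j, (a j : ℝ) ≤ x j ∧ x j < (a j : ℝ) + 1}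

lemma cubeUnion_eq_biUnion (A : Finset (ι → ℤ)) :
    cubeUnion A = ⋃ a ∈ A, (· - intVec a) ⁻¹' unitCube ι := by
  ext x
  simp [cubeUnion, unitCube, sub_lt_iff_lt_add']

lemma volume_cubeUnion [Fintype ι] (A : Finset (ι → ℤ)) : volume (cubeUnion A) = #A := by
  rw [cubeUnion_eq_biUnion, measure_biUnion_finset
    (pairwise_disjoint_preimage_sub_intVec_unitCube.set_pairwise _)
    fun a _ ↦ measurableSet_preimage_sub_unitCube _]
  simp [volume_preimage_sub_unitCube]

end Cube

lemma tsum_prod_apply_eq_prod_tsum {ι κ : Type*} [Fintype ι] (g : ι → κ → ℝ≥0∞) :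
    ∑' k : ι → κ, ∏ j, g j (k j) = ∏ j, ∑' n, g j n := by
  refine Fintype.induction_empty_option
    (P := fun ι _ ↦ ∀ g : ι → κ → ℝ≥0∞, ∑' k : ι → κ, ∏ j, g j (k j) = ∏ j, ∑' n, g j n)
    (fun α β _ e ih g ↦ ?_) (fun g ↦ by simp) (fun α _ ih g ↦ ?_) ι g
  · let _ := Fintype.ofEquiv β e.symm
    rw [← (Equiv.arrowCongr e (.refl κ)).tsum_eq, ← e.prod_comp, ← ih]
    refine tsum_congr fun k ↦ ?_
    simp [← e.prod_comp]
  · rw [← Equiv.piOptionEquivProd.symm.tsum_eq, ENNReal.tsum_prod']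
    simp [Fintype.prod_option, Equiv.piOptionEquivProd, ENNReal.tsum_mul_left,
      ENNReal.tsum_mul_right, ih]

section CubeTransform

variable {d : ℕ}

lemma ftInd_eq_integral_fourierChar (E : Set (Fin d → ℝ)) (ξ : Fin d → ℝ) :
    ftInd E ξ = ∫ x in E, (𝐞 (ξ ⬝ᵥ x) : ℂ) := by
  simp only [ftInd, exp_two_pi_I_mul_eq_fourierChar, dotProduct]

lemma ftInd_unitCube (ξ : Fin d → ℝ) : ftInd (unitCube (Fin d)) ξ = ∏ j, intervalFT (ξ j) := by
  simp only [ftInd_eq_integral_fourierChar, fourierChar_dotProduct, unitCube, intervalFT,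
    volume_pi, Measure.restrict_pi_pi, intervalIntegral.integral_of_le zero_le_one,
    ← integral_Ico_eq_integral_Ioc]
  exact integral_fintype_prod_eq_prod fun j t ↦ (𝐞 (ξ j * t) : ℂ)

lemma ftInd_unitCube_eq_zero_iff {ξ : Fin d → ℝ} :
    ftInd (unitCube (Fin d)) ξ = 0 ↔ ∃ j, ∃ n : ℤ, n ≠ 0 ∧ ξ j = n := by
  simp only [ftInd_unitCube, Finset.prod_eq_zero_iff, Finset.mem_univ, true_and,
    intervalFT_eq_zero_iff]

lemma ftInd_zero (E : Set (Fin d → ℝ)) : ftInd E 0 = (volume E).toReal := by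
  simp [ftInd, Measure.real]

lemma ftInd_unitCube_intVec (k : Fin d → ℤ) :
    ftInd (unitCube (Fin d)) (intVec k) = if k = 0 then 1 else 0 := by
  split_ifs with hk
  · simp [hk, ftInd_zero, volume_unitCube]
  · obtain ⟨j, hj⟩ := Function.ne_iff.1 hk
    exact ftInd_unitCube_eq_zero_iff.2 ⟨j, k j, hj, rfl⟩

lemma ftInd_unitCube_sub_ne_zero {x y : Fin d → ℝ} (hx : x ∈ unitCube (Fin d))
    (hy : y ∈ unitCube (Fin d)) : ftInd (unitCube (Fin d)) (x - y) ≠ 0 := by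
  rw [Ne, ftInd_unitCube_eq_zero_iff]
  rintro ⟨j, n, hn, hxy⟩
  have hlt : |x j - y j| < 1 := by
    simpa using Int.abs_sub_lt_one_of_floor_eq_floor
      ((Int.floor_eq_zero_iff.2 (hx j trivial)).trans (Int.floor_eq_zero_iff.2 (hy j trivial)).symm)
  rw [← Pi.sub_apply, hxy] at hlt
  exact hn (Int.abs_lt_one_iff.1 (by exact_mod_cast hlt))

lemma tsum_enorm_sq_ftInd_unitCube_sub_intVec (ξ : Fin d → ℝ) :
    ∑' k, ‖ftInd (unitCube (Fin d)) (ξ - intVec k)‖ₑ ^ 2 = 1 := by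
  simp only [ftInd_unitCube, Pi.sub_apply, intVec_apply]
  have hprod (k : Fin d → ℤ) : ‖∏ j, intervalFT (ξ j - k j)‖ₑ ^ 2 =
      ∏ j, ‖intervalFT (ξ j - k j)‖ₑ ^ 2 := by
    simp only [← ofReal_norm, norm_prod, ENNReal.ofReal_prod_of_nonneg, norm_nonneg,
      implies_true, Finset.prod_pow]
  simp only [hprod]
  rw [tsum_prod_apply_eq_prod_tsum fun j (n : ℤ) ↦ ‖intervalFT (ξ j - n)‖ₑ ^ 2]
  simp only [tsum_enorm_sq_intervalFT_sub_intCast, Finset.prod_const_one]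

lemma ftInd_preimage_sub (E : Set (Fin d → ℝ)) (v ξ : Fin d → ℝ) :
    ftInd ((· - v) ⁻¹' E) ξ = 𝐞 (ξ ⬝ᵥ v) * ftInd E ξ := by
  have hshift := (measurePreserving_sub_right volume v).setIntegral_preimage_emb
    (measurableEmbedding_subRight v) (fun x ↦ (𝐞 (ξ ⬝ᵥ (x + v)) : ℂ)) E
  simp only [sub_add_cancel] at hshift
  simp only [ftInd_eq_integral_fourierChar, hshift, dotProduct_add, coe_fourierChar_add,
    ← integral_const_mul, mul_comm]

end CubeTransform

lemma eq_zero_of_ae_tsum_sub_le {G : Type*} [AddGroup G] [TopologicalSpace G] [ContinuousSub G]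
    [MeasurableSpace G] {μ : Measure G} [μ.IsOpenPosMeasure] {F : G → ℝ≥0∞}
    (hF : Continuous F) (hF₀ : F 0 ≠ ∞) {S : Set G}
    (h : ∀ᵐ x ∂μ, ∑' s : S, F (x - s) ≤ F 0) : S.Pairwise fun s t ↦ F (s - t) = 0 := by
  classical
  intro s hs t ht hst
  have hpair : ∀ᵐ x ∂μ, F (x - s) + F (x - t) ≤ F 0 := by
    filter_upwards [h] with x hx
    refine le_trans ?_ hx
    rw [← Finset.sum_pair (f := fun u : S ↦ F (x - u)) (a := ⟨s, hs⟩) (b := ⟨t, ht⟩) (by simpa)]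
    exact ENNReal.sum_le_tsum _
  have hclosed : IsClosed {x | F (x - s) + F (x - t) ≤ F 0} :=
    isClosed_le (by fun_prop) continuous_const
  have heverywhere : ∀ x, F (x - s) + F (x - t) ≤ F 0 :=
    fun x ↦ hclosed.closure_subset (Measure.dense_of_ae hpair x)
  by_contra hne
  exact (ENNReal.lt_add_right hF₀ hne).not_ge (by simpa using heverywhere s)

section Averaging

variable {G : Type*} [AddGroup G] [MeasurableSpace G] [MeasurableAdd G] [MeasurableSub G]
  {μ : Measure G} [μ.IsAddRightInvariant] {κ : Type*} [Countable κ] {F : G → ℝ≥0∞} {Q : Set G}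

lemma setLIntegral_tsum_sub_eq (hQ : MeasurableSet Q) (hF : Measurable F) (v : κ → G) :
    ∫⁻ x in Q, ∑' i, F (x - v i) ∂μ = ∫⁻ y, F y * {i | y + v i ∈ Q}.encard ∂μ := by
  have hcount (y : G) : ({i | y + v i ∈ Q}.encard : ℝ≥0∞) = ∑' i, Q.indicator 1 (y + v i) := by
    rw [← ENNReal.tsum_set_one, tsum_subtype {i | y + v i ∈ Q} fun _ ↦ 1]
    rfl
  have hterm (i : κ) :
      ∫⁻ x in Q, F (x - v i) ∂μ = ∫⁻ y, F y * Q.indicator 1 (y + v i) ∂μ := by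
    rw [← lintegral_indicator hQ, ← lintegral_add_right_eq_self _ (v i)]
    refine lintegral_congr fun y ↦ ?_
    by_cases h : y + v i ∈ Q <;> simp [h]
  have : Measurable (Q.indicator (1 : G → ℝ≥0∞)) := measurable_one.indicator hQ
  simp only [hcount, ← ENNReal.tsum_mul_left]
  have hFm (i : κ) : Measurable fun x ↦ F (x - v i) := hF.comp (measurable_sub_const (v i))
  rw [lintegral_tsum fun i ↦ (hFm i).aemeasurable, lintegral_tsum fun i ↦ by fun_prop]
  exact tsum_congr hterm

lemma exists_natCast_le_encard_setOf_add_mem (hQ : MeasurableSet Q) (hF : Measurable F)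
    (hF₀ : ∫⁻ x, F x ∂μ ≠ 0) (hF₁ : ∫⁻ x, F x ∂μ ≠ ∞) (v : κ → G) {n : ℕ}
    (h : n * ∫⁻ x, F x ∂μ ≤ ∫⁻ x in Q, ∑' i, F (x - v i) ∂μ) :
    ∃ y, (n : ℕ∞) ≤ {i | y + v i ∈ Q}.encard := by
  by_contra! hlt
  have hcount (y : G) : ({i | y + v i ∈ Q}.encard : ℝ≥0∞) + 1 ≤ n := by
    exact_mod_cast ENat.toENNReal_le.2 (Order.add_one_le_of_lt (hlt y))
  have hbound : n * ∫⁻ x, F x ∂μ + ∫⁻ x, F x ∂μ ≤ n * ∫⁻ x, F x ∂μ := calc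
    _ ≤ ∫⁻ y, F y * {i | y + v i ∈ Q}.encard ∂μ + ∫⁻ x, F x ∂μ := by
      rw [← setLIntegral_tsum_sub_eq hQ hF]; gcongr
    _ = ∫⁻ y, F y * ({i | y + v i ∈ Q}.encard + 1) ∂μ := by
      rw [← lintegral_add_right _ hF]
      simp only [mul_add, mul_one]
    _ ≤ ∫⁻ y, n * F y ∂μ := by
      refine lintegral_mono fun y ↦ ?_
      rw [mul_comm]
      gcongr
      exact hcount y
    _ = n * ∫⁻ x, F x ∂μ := lintegral_const_mul _ hF
  exact (ENNReal.lt_add_right (by finiteness) hF₀).not_ge hbound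

end Averaging

lemma sum_norm_inner_sq_div_norm_sq {𝕜 E κ : Type*} [RCLike 𝕜] [NormedAddCommGroup E]
    [InnerProductSpace 𝕜 E] [FiniteDimensional 𝕜 E] [Fintype κ] {v : κ → E}
    (hv₀ : ∀ i, v i ≠ 0) (hv : Pairwise fun i j ↦ inner 𝕜 (v i) (v j) = 0)
    (hcard : Module.finrank 𝕜 E = Fintype.card κ) (x : E) :
    ∑ i, ‖inner 𝕜 (v i) x‖ ^ 2 / ‖v i‖ ^ 2 = ‖x‖ ^ 2 := by
  have hortho : Orthonormal 𝕜 fun i ↦ ((‖v i‖⁻¹ : ℝ) : 𝕜) • v i :=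
    ⟨fun i ↦ by simp [norm_smul, hv₀ i],
      fun i j hij ↦ by simp [inner_smul_left, inner_smul_right, hv hij]⟩
  have hspan : ⊤ ≤ Submodule.span 𝕜 (Set.range fun i ↦ ((‖v i‖⁻¹ : ℝ) : 𝕜) • v i) :=
    (hortho.linearIndependent.span_eq_top_of_card_eq_finrank' hcard.symm).ge
  rw [← (OrthonormalBasis.mk hortho hspan).sum_sq_norm_inner_right x]
  refine Finset.sum_congr rfl fun i _ ↦ ?_
  simp [inner_smul_left, mul_pow, div_eq_inv_mul]

section ExpSum

variable {ι : Type*} [Fintype ι]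

/-- The Fourier transform `χ̂_A` of the indicator of a finite set `A ⊆ ℤ^ι`, regarded as a
`ℤ^ι`-periodic function on `ℝ^ι`. -/
noncomputable def expSum (A : Finset (ι → ℤ)) (ξ : ι → ℝ) : ℂ := ∑ a ∈ A, (𝐞 (ξ ⬝ᵥ intVec a) : ℂ)

lemma continuous_expSum (A : Finset (ι → ℤ)) : Continuous (expSum A) := by
  unfold expSum
  fun_prop

lemma expSum_zero (A : Finset (ι → ℤ)) : expSum A 0 = #A := by
  simp [expSum]

lemma expSum_sub_intVec (A : Finset (ι → ℤ)) (ξ : ι → ℝ) (k : ι → ℤ) :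
    expSum A (ξ - intVec k) = expSum A ξ := by
  refine Finset.sum_congr rfl fun a _ ↦ ?_
  have hint : -(intVec k ⬝ᵥ intVec a) = ((-(k ⬝ᵥ a) : ℤ) : ℝ) := by simp [dotProduct]
  rw [sub_dotProduct, sub_eq_add_neg, hint, coe_fourierChar_add, fourierChar_intCast, mul_one]

lemma norm_expSum_sq (A : Finset (ι → ℤ)) (ξ : ι → ℝ) :
    ((‖expSum A ξ‖ ^ 2 : ℝ) : ℂ) = ∑ a ∈ A, ∑ b ∈ A, (𝐞 (intVec (a - b) ⬝ᵥ ξ) : ℂ) := by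
  rw [Complex.ofReal_pow, ← Complex.mul_conj', expSum, map_sum, Finset.sum_mul_sum]
  simp only [conj_fourierChar, ← coe_fourierChar_add, ← sub_eq_add_neg, ← dotProduct_sub,
    ← map_sub, dotProduct_comm]

/-- The vector of values on `A` of the exponential with frequency `ξ`, i.e. the restriction of that
character of `ℤ^ι` to `A`, as an element of `ℓ²(A)`. -/
noncomputable def expVec (A : Finset (ι → ℤ)) (ξ : ι → ℝ) : EuclideanSpace ℂ A :=
  WithLp.toLp 2 fun a ↦ (𝐞 (ξ ⬝ᵥ intVec a) : ℂ)

lemma inner_expVec (A : Finset (ι → ℤ)) (ξ η : ι → ℝ) :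
    inner ℂ (expVec A ξ) (expVec A η) = expSum A (η - ξ) := by
  simp only [expVec, PiLp.inner_apply, RCLike.inner_apply, conj_fourierChar,
    ← coe_fourierChar_add, ← sub_eq_add_neg, ← sub_dotProduct, expSum]
  exact Finset.sum_coe_sort A fun a ↦ (𝐞 ((η - ξ) ⬝ᵥ intVec a) : ℂ)

lemma norm_expVec_sq (A : Finset (ι → ℤ)) (ξ : ι → ℝ) : ‖expVec A ξ‖ ^ 2 = #A := by
  simp [EuclideanSpace.norm_sq_eq, expVec, Circle.norm_coe]

end ExpSum

section DiscreteSpectrum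

variable {ι : Type*} [Fintype ι] {A : Finset (ι → ℤ)} {S : Finset (ι → ℝ)}

/-- `S` is a spectrum of the finite set `A ⊆ ℤ^ι`: the exponentials with frequencies in `S` form an
orthogonal basis of `ℓ²(A)`. Frequencies in the torus are represented by vectors of `ℝ^ι`. -/
def IsDiscreteSpectrum (A : Finset (ι → ℤ)) (S : Finset (ι → ℝ)) : Prop :=
  #S = #A ∧ (S : Set (ι → ℝ)).Pairwise fun s t ↦ expSum A (s - t) = 0

lemma IsDiscreteSpectrum.sum_norm_expSum_sub_sq (h : IsDiscreteSpectrum A S) (ξ : ι → ℝ) :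
    ∑ s ∈ S, ‖expSum A (ξ - s)‖ ^ 2 = (#A : ℝ) ^ 2 := by
  rcases A.eq_empty_or_nonempty with rfl | hA
  · simp [expSum]
  have hcard : (#A : ℝ) ≠ 0 := by exact_mod_cast hA.card_pos.ne'
  have hne (s : S) : expVec A s ≠ 0 := fun h₀ ↦
    hcard (by simpa [h₀] using (norm_expVec_sq A s).symm)
  have hortho : Pairwise fun s t : S ↦ inner ℂ (expVec A (s : ι → ℝ)) (expVec A t) = 0 :=
    fun s t hst ↦ (inner_expVec ..).trans (h.2 t.2 s.2 (Subtype.coe_injective.ne hst.symm))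
  have hParseval := sum_norm_inner_sq_div_norm_sq hne hortho (by simp [h.1]) (expVec A ξ)
  simp only [inner_expVec, norm_expVec_sq, ← Finset.sum_div] at hParseval
  rw [div_eq_iff hcard] at hParseval
  rw [sq (#A : ℝ), ← hParseval]
  exact (Finset.sum_coe_sort S fun s ↦ ‖expSum A (ξ - s)‖ ^ 2).symm

lemma IsDiscreteSpectrum.injective_add_intVec (h : IsDiscreteSpectrum A S) :
    Function.Injective fun p : S × (ι → ℤ) ↦ (p.1 : ι → ℝ) + intVec p.2 := by
  rintro ⟨s, k⟩ ⟨t, l⟩ hst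
  have hsub : (s : ι → ℝ) - t - intVec (l - k) = 0 := by
    rw [map_sub]
    linear_combination hst
  have hcard : (#A : ℂ) ≠ 0 := by
    rw [← h.1]
    exact_mod_cast Finset.card_ne_zero_of_mem s.2
  have hs : s = t := by
    by_contra hne
    refine hcard ?_
    rw [← expSum_zero, ← hsub, expSum_sub_intVec, h.2 s.2 t.2 (Subtype.coe_injective.ne hne)]
  subst hs
  simpa [funext_iff] using hst

end DiscreteSpectrum

lemma spectralZd_iff_exists_isDiscreteSpectrum {d : ℕ} {A : Finset (Fin d → ℤ)} :
    SpectralZd A ↔ ∃ S, IsDiscreteSpectrum A S := by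
  simp only [SpectralZd, IsDiscreteSpectrum, exp_two_pi_I_mul_eq_fourierChar]
  rfl

lemma lintegral_unitCube_enorm_expSum_sq {d : ℕ} (A : Finset (Fin d → ℤ)) :
    ∫⁻ ξ in unitCube (Fin d), ‖expSum A ξ‖ₑ ^ 2 = #A := by
  have : IsFiniteMeasure (volume.restrict (unitCube (Fin d))) := ⟨by simp [volume_unitCube]⟩
  have horthonormal (a b : Fin d → ℤ) :
      ∫ ξ in unitCube (Fin d), (𝐞 (intVec (a - b) ⬝ᵥ ξ) : ℂ) = if a = b then 1 else 0 := by
    rw [← ftInd_eq_integral_fourierChar, ftInd_unitCube_intVec]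
    simp only [sub_eq_zero]
  have hintegrable : IntegrableOn (fun ξ ↦ ‖expSum A ξ‖ ^ 2) (unitCube (Fin d)) := by
    have h := integrable_finsetSum A fun a _ ↦ integrable_finsetSum A fun b _ ↦
      integrable_fourierChar_dotProduct (μ := volume.restrict (unitCube (Fin d)))
        (intVec (a - b))
    simpa only [← norm_expSum_sq] using! h.re
  have hmean : ∫ ξ in unitCube (Fin d), ‖expSum A ξ‖ ^ 2 = #A := by
    rw [← Complex.ofReal_inj, ← integral_complex_ofReal]
    simp only [norm_expSum_sq]
    rw [integral_finsetSum _ fun a _ ↦ integrable_finsetSum _ fun b _ ↦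
      integrable_fourierChar_dotProduct _]
    simp only [integral_finsetSum _ fun _ _ ↦ integrable_fourierChar_dotProduct _, horthonormal]
    simp
  calc ∫⁻ ξ in unitCube (Fin d), ‖expSum A ξ‖ₑ ^ 2
    _ = ∫⁻ ξ in unitCube (Fin d), ENNReal.ofReal (‖expSum A ξ‖ ^ 2) := by
      simp only [ENNReal.ofReal_pow (norm_nonneg _), ofReal_norm]
    _ = #A := by
      rw [← ofReal_integral_eq_lintegral_ofReal hintegrable (.of_forall fun _ ↦ sq_nonneg _),
        hmean, ENNReal.ofReal_natCast]

section CubeUnionTransform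

variable {d : ℕ}

lemma ftInd_cubeUnion (A : Finset (Fin d → ℤ)) (ξ : Fin d → ℝ) :
    ftInd (cubeUnion A) ξ = expSum A ξ * ftInd (unitCube (Fin d)) ξ := by
  have hfin (a : Fin d → ℤ) :
      IsFiniteMeasure (volume.restrict ((· - intVec a) ⁻¹' unitCube (Fin d))) :=
    ⟨by simp [volume_preimage_sub_unitCube]⟩
  rw [ftInd_eq_integral_fourierChar, cubeUnion_eq_biUnion, integral_biUnion_finset _
    (fun a _ ↦ measurableSet_preimage_sub_unitCube _)
    (pairwise_disjoint_preimage_sub_intVec_unitCube.set_pairwise _)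
    fun a _ ↦ integrable_fourierChar_dotProduct ξ]
  simp only [← ftInd_eq_integral_fourierChar, ftInd_preimage_sub, expSum, Finset.sum_mul]

lemma continuous_enorm_sq_ftInd_cubeUnion (A : Finset (Fin d → ℤ)) :
    Continuous fun ξ ↦ ‖ftInd (cubeUnion A) ξ‖ₑ ^ 2 := by
  have hA := continuous_expSum A
  have hI := continuous_intervalFT
  simp only [ftInd_cubeUnion, ftInd_unitCube]
  exact (ENNReal.continuous_pow 2).comp (by fun_prop)

lemma tsum_enorm_sq_ftInd_cubeUnion_sub_intVec (A : Finset (Fin d → ℤ)) (ξ : Fin d → ℝ) :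
    ∑' k, ‖ftInd (cubeUnion A) (ξ - intVec k)‖ₑ ^ 2 = ‖expSum A ξ‖ₑ ^ 2 := by
  simp only [ftInd_cubeUnion, expSum_sub_intVec, enorm_mul, mul_pow, ENNReal.tsum_mul_left,
    tsum_enorm_sq_ftInd_unitCube_sub_intVec, mul_one]

lemma lintegral_enorm_sq_ftInd_cubeUnion (A : Finset (Fin d → ℤ)) :
    ∫⁻ ξ, ‖ftInd (cubeUnion A) ξ‖ₑ ^ 2 = #A := by
  have h := setLIntegral_tsum_sub_eq (μ := volume) (measurableSet_unitCube (ι := Fin d))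
    (continuous_enorm_sq_ftInd_cubeUnion A).measurable intVec
  simpa only [tsum_enorm_sq_ftInd_cubeUnion_sub_intVec, lintegral_unitCube_enorm_expSum_sq,
    encard_setOf_add_intVec_mem_unitCube, ENat.toENNReal_one, mul_one, eq_comm] using h

end CubeUnionTransform

lemma tsum_norm_sq_eq_toReal_iff {κ V : Type*} [SeminormedAddGroup V] {f : κ → V} {c : ℝ≥0∞}
    (hc₀ : c ≠ 0) (hc : c ≠ ∞) : ∑' i, ‖f i‖ ^ 2 = c.toReal ↔ ∑' i, ‖f i‖ₑ ^ 2 = c := by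
  have h : ∑' i, ‖f i‖ ^ 2 = (∑' i, ‖f i‖ₑ ^ 2).toReal := by
    rw [ENNReal.tsum_toReal_eq fun i ↦ by finiteness]
    simp
  rw [h, ENNReal.toReal_eq_toReal_iff]
  simp [hc₀, hc]

section ContinuousSpectrum

variable {d : ℕ}

/-- `S` is a spectrum of `E ⊆ ℝ^d`, i.e. the exponentials with frequencies in `S` form an orthogonal
basis of `L²(E)`, in its equivalent formulation as a tiling of `ℝ^d` by the translates of
`|χ̂_E|²` along `S`. The sum is taken in `[0, ∞]`, so that divergence has no junk value. -/
def IsSpectrum (E S : Set (Fin d → ℝ)) : Prop :=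
  S.Countable ∧ ∀ᵐ x, ∑' s : S, ‖ftInd E (x - s)‖ₑ ^ 2 = volume E ^ 2

lemma spectralRd_iff_exists_isSpectrum {E : Set (Fin d → ℝ)} (hE : volume E ≠ ∞) :
    SpectralRd E ↔ ∃ S, IsSpectrum E S := by
  rcases eq_or_ne (volume E) 0 with h₀ | h₀
  · exact iff_of_true ⟨∅, by simp [h₀]⟩ ⟨∅, by simp [IsSpectrum, h₀]⟩
  · simp only [SpectralRd, IsSpectrum, ← ENNReal.toReal_pow,
      tsum_norm_sq_eq_toReal_iff (pow_ne_zero 2 h₀) (ENNReal.pow_ne_top hE)]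

lemma IsDiscreteSpectrum.isSpectrum_cubeUnion {A : Finset (Fin d → ℤ)} {S : Finset (Fin d → ℝ)}
    (h : IsDiscreteSpectrum A S) :
    IsSpectrum (cubeUnion A)
      (Set.range fun p : S × (Fin d → ℤ) ↦ (p.1 : Fin d → ℝ) + intVec p.2) := by
  refine ⟨Set.countable_range _, .of_forall fun x ↦ ?_⟩
  calc ∑' t : Set.range fun p : S × (Fin d → ℤ) ↦ (p.1 : Fin d → ℝ) + intVec p.2,
        ‖ftInd (cubeUnion A) (x - t)‖ₑ ^ 2
    _ = ∑' (s : S) (k : Fin d → ℤ), ‖ftInd (cubeUnion A) (x - s - intVec k)‖ₑ ^ 2 := by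
      rw [tsum_range (fun t ↦ ‖ftInd (cubeUnion A) (x - t)‖ₑ ^ 2) h.injective_add_intVec,
        ENNReal.tsum_prod']
      simp only [sub_sub]
    _ = ∑ s ∈ S, ‖expSum A (x - s)‖ₑ ^ 2 := by
      simp only [tsum_enorm_sq_ftInd_cubeUnion_sub_intVec]
      rw [tsum_fintype, Finset.sum_coe_sort S fun s ↦ ‖expSum A (x - s)‖ₑ ^ 2]
    _ = ENNReal.ofReal (∑ s ∈ S, ‖expSum A (x - s)‖ ^ 2) := by
      rw [ENNReal.ofReal_sum_of_nonneg fun _ _ ↦ sq_nonneg _]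
      simp only [ENNReal.ofReal_pow (norm_nonneg _), ofReal_norm]
    _ = volume (cubeUnion A) ^ 2 := by
      rw [h.sum_norm_expSum_sub_sq, volume_cubeUnion, ENNReal.ofReal_pow (Nat.cast_nonneg _),
        ENNReal.ofReal_natCast]

lemma IsSpectrum.pairwise_ftInd_cubeUnion_sub_eq_zero {A : Finset (Fin d → ℤ)}
    {S : Set (Fin d → ℝ)} (h : IsSpectrum (cubeUnion A) S) :
    S.Pairwise fun s t ↦ ftInd (cubeUnion A) (s - t) = 0 := by
  have hF₀ : ‖ftInd (cubeUnion A) 0‖ₑ ^ 2 = volume (cubeUnion A) ^ 2 := by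
    simp [ftInd_zero, volume_cubeUnion, ← ofReal_norm]
  have hzero := eq_zero_of_ae_tsum_sub_le (μ := volume) (S := S)
    (continuous_enorm_sq_ftInd_cubeUnion A) (by finiteness)
    (h.2.mono fun x hx ↦ (hx.trans hF₀.symm).le)
  simpa using hzero

lemma IsSpectrum.exists_subset_translate_mem_unitCube {A : Finset (Fin d → ℤ)}
    {S : Set (Fin d → ℝ)} (h : IsSpectrum (cubeUnion A) S) :
    ∃ (y : Fin d → ℝ) (T : Finset (Fin d → ℝ)), #T = #A ∧ ↑T ⊆ S ∧
      ∀ t ∈ T, y + t ∈ unitCube (Fin d) := by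
  rcases A.eq_empty_or_nonempty with rfl | hA
  · exact ⟨0, ∅, by simp⟩
  have : Countable S := h.1
  have hmass := lintegral_enorm_sq_ftInd_cubeUnion A
  have htiles : ∫⁻ x in unitCube (Fin d), ∑' s : S, ‖ftInd (cubeUnion A) (x - s)‖ₑ ^ 2 =
      #A * #A := by
    rw [lintegral_congr_ae (ae_restrict_of_ae h.2), setLIntegral_const, volume_unitCube, mul_one,
      volume_cubeUnion, sq]
  obtain ⟨y, hy⟩ := exists_natCast_le_encard_setOf_add_mem (μ := volume) (n := #A)
    (v := ((↑) : S → Fin d → ℝ)) measurableSet_unitCube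
    (continuous_enorm_sq_ftInd_cubeUnion A).measurable
    (by simp [hmass, hA.ne_empty]) (by simp [hmass])
    (by rw [hmass, htiles])
  obtain ⟨T, hTQ, hTcard⟩ := Set.exists_subset_encard_eq hy
  lift T to Finset S using Set.finite_of_encard_eq_coe hTcard
  refine ⟨y, T.map (.subtype _), ?_, by simp, ?_⟩
  · rw [Finset.card_map]
    exact_mod_cast (Set.encard_coe_eq_coe_finsetCard T).symm.trans hTcard
  · simpa using fun s hs hsT ↦ hTQ hsT

lemma IsSpectrum.exists_isDiscreteSpectrum {A : Finset (Fin d → ℤ)} {S : Set (Fin d → ℝ)}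
    (h : IsSpectrum (cubeUnion A) S) : ∃ T, IsDiscreteSpectrum A T := by
  obtain ⟨y, T, hcard, hTS, hT⟩ := h.exists_subset_translate_mem_unitCube
  refine ⟨T, hcard, fun s hs t ht hst ↦ ?_⟩
  have hne : ftInd (unitCube (Fin d)) (s - t) ≠ 0 := by
    simpa using ftInd_unitCube_sub_ne_zero (hT s hs) (hT t ht)
  have hzero : ftInd (cubeUnion A) (s - t) = 0 :=
    h.pairwise_ftInd_cubeUnion_sub_eq_zero (hTS hs) (hTS ht) hst
  rw [ftInd_cubeUnion] at hzero
  exact (mul_eq_zero.1 hzero).resolve_right hne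

end ContinuousSpectrum

/-- Theorem `th:discrete-continuous`: A finite set `A ⊆ ℤ^d` is spectral
in `ℤ^d` if and only if `A + [0,1)^d` is spectral in `ℝ^d`. -/
theorem stmt18 (d : ℕ) (A : Finset (Fin d → ℤ)) :
    SpectralZd A ↔
    SpectralRd {x : Fin d → ℝ | ∃ a ∈ A, ∀ j, (a j : ℝ) ≤ x j ∧ x j < (a j : ℝ) + 1} := by
  have hvol : volume (cubeUnion A) ≠ ∞ := by simp [volume_cubeUnion]
  change SpectralZd A ↔ SpectralRd (cubeUnion A)
  rw [spectralZd_iff_exists_isDiscreteSpectrum, spectralRd_iff_exists_isSpectrum hvol]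
  constructor
  · rintro ⟨S, hS⟩
    exact ⟨_, hS.isSpectrum_cubeUnion⟩
  · rintro ⟨S, hS⟩
    exact hS.exists_isDiscreteSpectrum
end
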